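/- Fix α ∈ (0,1) and d ≥ 2, and let 𝕃_{d,α} be the set of convex domains 𝒞 ⊂ ℂ^d containing no complex affine line such that: (1) 𝒞 ∈ 𝕂_d; (2) (ℂ·e_1) ∩ 𝒞 = { z·e_1 : z ∈ ℂ, Im z > 0 }; and (3) δ_𝒞(r·i·e_1; e_2) ≤ r^{1/(2+α)} for all r ≥ 1. Then 𝕃_{d,α} is compact: every sequence of domains in 𝕃_{d,α} has a subsequence converging in the local Hausdorff topology to a domain belonging to 𝕃_{d,α}. -/

import Mathlib

open Set Metric Filter Topology
open scoped ENNReal NNReal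

noncomputable section

section Defs

variable {E F : Type*} [NormedAddCommGroup E] [NormedSpace ℂ E]
  [NormedAddCommGroup F] [NormedSpace ℂ F]

/-- A convex domain: a non-empty open convex subset. -/
def IsConvexDomain (Ω : Set E) : Prop := IsOpen Ω ∧ Convex ℝ Ω ∧ Ω.Nonempty

/-- `Ω` contains no complex affine line `a + ℂ·b`, `b ≠ 0`. -/
def NoComplexLine (Ω : Set E) : Prop :=
  ∀ a b : E, b ≠ 0 → ¬ (∀ lam : ℂ, a + lam • b ∈ Ω)

/-- Membership in `𝕏_d`: a convex domain containing no complex affine line. -/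
def InX (Ω : Set E) : Prop := IsConvexDomain Ω ∧ NoComplexLine Ω

/-- Convergence of a sequence of sets in the local Hausdorff topology. -/
def LocHausConv (Ωn : ℕ → Set E) (Ω : Set E) : Prop :=
  ∃ R₀ : ℝ, 0 < R₀ ∧ ∀ R : ℝ, R₀ ≤ R →
    Tendsto (fun n => Metric.hausdorffDist (Ωn n ∩ Metric.ball 0 R) (Ω ∩ Metric.ball 0 R))
      atTop (nhds 0)

/-- The sequence `z` is compactly divergent in `Ω`. -/
def CompactlyDivergent (Ω : Set E) (z : ℕ → E) : Prop :=
  ∀ K : Set E, IsCompact K → K ⊆ Ω → ∃ N : ℕ, ∀ n ≥ N, z n ∉ K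

/-- `Ω'` is an affine limit of `Ω`. -/
def IsAffineLimit (Ω Ω' : Set E) : Prop :=
  InX Ω' ∧
  ∃ (z : ℕ → E) (zlim : E) (A : ℕ → (E ≃ᵃ[ℂ] E)),
    (∀ n, z n ∈ Ω) ∧ CompactlyDivergent Ω z ∧ zlim ∈ Ω' ∧
    LocHausConv (fun n => (A n) '' Ω) Ω' ∧
    Tendsto (fun n => A n (z n)) atTop (nhds zlim)

/-- `S ⊆ E` and `T ⊆ F` are biholomorphic. -/
def Biholomorphic (S : Set E) (T : Set F) : Prop :=
  ∃ (f : E → F) (g : F → E),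
    DifferentiableOn ℂ f S ∧ DifferentiableOn ℂ g T ∧
    MapsTo f S T ∧ MapsTo g T S ∧ InvOn g f S T

/-- The bidisk `𝔻 × 𝔻 ⊆ ℂ × ℂ`. -/
def unitBidisk : Set (ℂ × ℂ) := (Metric.ball (0:ℂ) 1) ×ˢ (Metric.ball (0:ℂ) 1)

/-- The infinitesimal Kobayashi metric of `Ω ⊆ E`. -/
def kob (Ω : Set E) (z v : E) : ℝ :=
  sInf { c : ℝ | ∃ (ξ : ℂ) (f : ℂ → E),
    DifferentiableOn ℂ f (Metric.ball 0 1) ∧ MapsTo f (Metric.ball 0 1) Ω ∧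
    f 0 = z ∧ ξ • deriv f 0 = v ∧ c = ‖ξ‖ }

/-- `δ_Ω(z; v)`: the distance from `z` to `(z + ℂ·v) ∩ ∂Ω`, valued in `ℝ≥0∞`
(`⊤` when the intersection is empty). -/
def distInDir (Ω : Set E) (z v : E) : ℝ≥0∞ :=
  EMetric.infEdist z ({x | ∃ lam : ℂ, x = z + lam • v} ∩ frontier Ω)

end Defs


/-- The square `𝔻₁ = {z : |Re z| + |Im z| < 1}`. -/
def D1set : Set ℂ := {z : ℂ | |z.re| + |z.im| < 1}

/-- The planes `Z_1, …, Z_d` (indexed here by `Fin d`): `Z_1 = span{e_2, …, e_d}` and,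
for `2 ≤ j ≤ d`, `Z_j = i e_1 + e_j + span{e_{j+1}, …, e_d}`. -/
def Zset (d : ℕ) [NeZero d] (m : Fin d) : Set (EuclideanSpace ℂ (Fin d)) :=
  if m = 0 then {z | z 0 = 0}
  else {z | z 0 = Complex.I ∧ z m = 1 ∧ ∀ k : Fin d, 0 < k → k < m → z k = 0}

/-- The family `𝕂_d`: convex domains `Ω ∈ 𝕏_d` with `Z_i ∩ Ω = ∅` and
`i e_1 + 𝔻₁·e_i ⊆ Ω` for all `i = 1, …, d`. -/
def Kd (d : ℕ) [NeZero d] : Set (Set (EuclideanSpace ℂ (Fin d))) :=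
  {Ω | InX Ω ∧ ∀ m : Fin d,
    Zset d m ∩ Ω = ∅ ∧
    ∀ w ∈ D1set,
      Complex.I • EuclideanSpace.single (0 : Fin d) (1:ℂ) +
        w • EuclideanSpace.single m (1:ℂ) ∈ Ω}

/-- The family `𝕃_{d,α}`: domains `𝒞 ∈ 𝕂_d` with `(ℂ·e_1) ∩ 𝒞 = {z·e_1 : Im z > 0}`
and `δ_𝒞(r i e_1; e_2) ≤ r^{1/(2+α)}` for all `r ≥ 1`. -/
def Ld (d : ℕ) [NeZero d] (hd : 1 < d) (α : ℝ) : Set (Set (EuclideanSpace ℂ (Fin d))) :=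
  {C | C ∈ Kd d ∧
    (Set.range (fun z : ℂ => z • EuclideanSpace.single (0 : Fin d) (1:ℂ)) ∩ C =
      (fun z : ℂ => z • EuclideanSpace.single (0 : Fin d) (1:ℂ)) '' {z : ℂ | 0 < z.im}) ∧
    ∀ r : ℝ, 1 ≤ r →
      distInDir C (((r : ℂ) * Complex.I) • EuclideanSpace.single (0 : Fin d) (1:ℂ))
          (EuclideanSpace.single (⟨1, hd⟩ : Fin d) (1:ℂ)) ≤
        ENNReal.ofReal (r ^ (1 / (2 + α)))}

/-!
Every sequence of sets in a σ-compact, locally compact metric space has a subsequence converging in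
the sense of kernels: apply the Arzelà–Ascoli theorem to the truncated distances to the complements.
The domains in `𝕂_d` all contain a fixed ball around `i e_1`, and convexity turns this into uniform
control: a point of a domain can be pushed towards `i e_1` to become the centre of a ball of
definite radius in the domain. Hence kernel limits inherit the inclusions that define the family,
including the half-plane in `ℂ·e_1`, and kernel convergence becomes local Hausdorff convergence. The
planes `Z_i` are disjoint from the limit, and together they meet every complex line through `i e_1`;
since a convex domain containing a complex line contains its translates through all of its points,
the limit contains no complex line. Finally, a closed disc contained in the limit is eventually
contained in the domains, so an upper bound on `δ(z; v)` passes to the limit.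
-/

section Sets

theorem range_inter_eq_image_iff {α β : Type*} {f : α → β} (hf : Function.Injective f)
    {s : Set α} {t : Set β} : range f ∩ t = f '' s ↔ f ⁻¹' t = s := by
  rw [← image_preimage_eq_range_inter, hf.image_injective.eq_iff]

theorem subset_interior_of_isPreconnected_of_disjoint_frontier {X : Type*} [TopologicalSpace X]
    {D s : Set X} (hD : IsPreconnected D) (hDs : (D ∩ interior s).Nonempty)
    (hfr : Disjoint D (frontier s)) : D ⊆ interior s := by
  refine hD.subset_left_of_subset_union isOpen_interior isClosed_closure.isOpen_compl
    (disjoint_compl_right.mono_left interior_subset_closure) (fun x hx => ?_) hDs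
  by_cases hxs : x ∈ interior s
  · exact .inl hxs
  · exact .inr fun hcl => disjoint_left.1 hfr hx ⟨hcl, hxs⟩

end Sets

section Convexity

open scoped Pointwise

theorem mapsTo_interior_of_mapsTo_of_isOpen {F E : Type*}
    [AddCommGroup F] [Module ℝ F] [TopologicalSpace F] [IsTopologicalAddGroup F]
    [ContinuousSMul ℝ F]
    [AddCommGroup E] [Module ℝ E] [TopologicalSpace E] [IsTopologicalAddGroup E]
    [ContinuousConstSMul ℝ E]
    {s : Set E} (hs : Convex ℝ s) (f : F →ᵃ[ℝ] E) {U : Set F} (hU : IsOpen U)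
    (hf : MapsTo f U s) {u₀ : F} (hu₀ : f u₀ ∈ interior s) : MapsTo f U (interior s) := by
  intro u hu
  have hline : Continuous fun t : ℝ => AffineMap.lineMap u₀ u t := AffineMap.lineMap_continuous
  have hnear : ∀ᶠ t in 𝓝[>] (1 : ℝ), AffineMap.lineMap u₀ u t ∈ U :=
    (hline.continuousAt.eventually (hU.mem_nhds (by simpa using hu))).filter_mono
      nhdsWithin_le_nhds
  obtain ⟨t, htU, ht : 1 < t⟩ := (hnear.and self_mem_nhdsWithin).exists
  refine hs.openSegment_interior_self_subset_interior hu₀ (hf htU) ?_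
  rw [openSegment_eq_image_lineMap]
  refine ⟨t⁻¹, ⟨by positivity, inv_lt_one_of_one_lt₀ ht⟩, ?_⟩
  rw [← AffineMap.apply_lineMap]
  have : (1 : ℝ) - t⁻¹ + t⁻¹ = 1 := by ring
  simp [AffineMap.lineMap_apply, smul_smul, inv_mul_cancel₀ (zero_lt_one.trans ht).ne']

theorem add_mem_of_forall_ray_mem {E : Type*} [AddCommGroup E] [Module ℝ E] [TopologicalSpace E]
    [IsTopologicalAddGroup E] [ContinuousSMul ℝ E] {s : Set E} (hs : Convex ℝ s) (hso : IsOpen s)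
    {a v : E} (hray : ∀ t : ℝ, 0 < t → a + t • v ∈ s) {p : E} (hp : p ∈ s) : p + v ∈ s := by
  have hclosure : p + (2 : ℝ) • v ∈ closure s := by
    have hlim : Tendsto (fun t : ℝ => (1 - t) • p + t • a + (2 : ℝ) • v) (𝓝[>] 0)
        (𝓝 (p + (2 : ℝ) • v)) := by
      refine (Continuous.tendsto' ?_ 0 _ (by simp)).mono_left nhdsWithin_le_nhds
      fun_prop
    refine mem_closure_of_tendsto hlim ?_
    filter_upwards [Ioo_mem_nhdsGT (zero_lt_one' ℝ)] with t ⟨ht0, ht1⟩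
    convert hs hp (hray (t⁻¹ * 2) (by positivity)) (sub_nonneg.2 ht1.le) ht0.le (by ring) using 1
    rw [smul_add, smul_smul, mul_inv_cancel_left₀ ht0.ne', add_assoc]
  rw [← hso.interior_eq] at hp ⊢
  convert hs.combo_interior_closure_mem_interior hp hclosure
    (show (0 : ℝ) < 1 / 2 by norm_num) (by norm_num) (add_halves 1) using 1
  module

theorem ball_combo_subset {E : Type*} [SeminormedAddCommGroup E] [NormedSpace ℝ E]
    {s : Set E} (hs : Convex ℝ s) {x p : E} {r t : ℝ} (hx : x ∈ s) (hp : ball p r ⊆ s)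
    (ht : 0 < t) (ht1 : t ≤ 1) : ball ((1 - t) • x + t • p) (t * r) ⊆ s :=
  calc ball ((1 - t) • x + t • p) (t * r) = {(1 - t) • x} + t • ball p r := by
        rw [_root_.smul_ball ht.ne', Real.norm_of_nonneg ht.le, singleton_add_ball]
    _ ⊆ (1 - t) • s + t • s :=
        add_subset_add (singleton_subset_iff.2 (smul_mem_smul_set hx)) (smul_set_mono hp)
    _ ⊆ s := convex_iff_pointwise_add_subset.1 hs (sub_nonneg.2 ht1) ht.le (sub_add_cancel 1 t)

theorem mem_interior_of_forall_add_smul_single_mem {ι 𝕜 : Type*} [Finite ι] [Nonempty ι]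
    [DecidableEq ι] [RCLike 𝕜] {s : Set (EuclideanSpace 𝕜 ι)} (hs : Convex ℝ s)
    {p : EuclideanSpace 𝕜 ι} {U : Set 𝕜} (hU : U ∈ 𝓝 0)
    (h : ∀ m, ∀ w ∈ U, p + w • EuclideanSpace.single m (1 : 𝕜) ∈ s) : p ∈ interior s := by
  cases nonempty_fintype ι
  set N : ℝ := (Fintype.card ι : ℝ)
  have hN : N ≠ 0 := by simp [N]
  have hcoord : ∀ᶠ y in 𝓝 p, ∀ m, (N • (y - p)) m ∈ U := by
    refine eventually_all.2 fun m => Tendsto.eventually ?_ hU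
    exact Continuous.tendsto' (by fun_prop) _ _ (by simp)
  rw [mem_interior_iff_mem_nhds]
  filter_upwards [hcoord] with y hy
  have hmean : ∑ m : ι, N⁻¹ • (p + (N • (y - p)) m • EuclideanSpace.single m (1 : 𝕜)) ∈ s :=
    hs.sum_mem (fun _ _ => by positivity) (by simp [N]) fun m _ => h m _ (hy m)
  have hcoords : ∑ m : ι, (N • (y - p)) m • EuclideanSpace.single m (1 : 𝕜) = N • (y - p) := by
    simpa using (EuclideanSpace.basisFun ι 𝕜).sum_repr (N • (y - p))
  rwa [← Finset.smul_sum, Finset.sum_add_distrib, hcoords, Finset.sum_const, Finset.card_univ,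
    ← Nat.cast_smul_eq_nsmul ℝ, ← smul_add, inv_smul_smul₀ hN, add_sub_cancel] at hmean

end Convexity

section Kernel

theorem isCompact_setOf_lipschitzWith {X Y : Type*} [PseudoEMetricSpace X] [PseudoEMetricSpace Y]
    (K : ℝ≥0) {s : X → Set Y} (hs : ∀ x, IsCompact (s x)) :
    IsCompact {f : C(X, Y) | LipschitzWith K f ∧ ∀ x, f x ∈ s x} := by
  refine ArzelaAscoli.isCompact_of_equicontinuous _ ?_
    (LipschitzWith.uniformEquicontinuous _ K fun f => f.2.1).equicontinuous
  have himage : ContinuousMap.toFun '' {f : C(X, Y) | LipschitzWith K f ∧ ∀ x, f x ∈ s x} =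
      {f : X → Y | LipschitzWith K f} ∩ univ.pi s := by
    ext f
    constructor
    · rintro ⟨f, ⟨hfK, hfs⟩, rfl⟩
      exact ⟨hfK, fun x _ => hfs x⟩
    · rintro ⟨hfK, hfs⟩
      exact ⟨⟨f, hfK.continuous⟩, ⟨hfK, fun x => hfs x (mem_univ x)⟩, rfl⟩
  rw [himage]
  exact (isCompact_univ_pi hs).inter_left (isClosed_setOfPred_lipschitzWith K)

theorem thickenedIndicator_compl_le_of_ball_subset {X : Type*} [PseudoMetricSpace X] {δ : ℝ}
    (hδ : 0 < δ) {s : Set X} {x : X} {t : ℝ} (ht : 0 ≤ t) (h : ball x t ⊆ s) :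
    thickenedIndicator hδ sᶜ x ≤ (1 - t / δ).toNNReal := by
  have hdist : ENNReal.ofReal t ≤ infEDist x sᶜ := by
    refine le_infEDist.2 fun y hy => ?_
    rw [edist_dist, dist_comm]
    exact ENNReal.ofReal_le_ofReal (not_lt.1 fun hlt => hy (h hlt))
  rw [thickenedIndicator_apply]
  refine ENNReal.toNNReal_mono ENNReal.ofReal_ne_top ?_
  calc thickenedIndicatorAux δ sᶜ x = 1 - infEDist x sᶜ / ENNReal.ofReal δ := rfl
    _ ≤ 1 - ENNReal.ofReal (t / δ) := by
        rw [ENNReal.ofReal_div_of_pos hδ]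
        gcongr
    _ = ENNReal.ofReal (1 - t / δ) := by
        rw [ENNReal.ofReal_sub _ (by positivity), ENNReal.ofReal_one]

/-- Convergence of the sets `S i` to the open set `C` in the sense of kernels, encoded by two
inclusions: compact subsets of `C` are eventually contained in `S i`, and, uniformly on compact
sets, the centre of a ball of fixed radius contained in `S i` eventually belongs to `C`. -/
structure KernelConv {ι X : Type*} [PseudoMetricSpace X] (S : ι → Set X) (l : Filter ι)
    (C : Set X) : Prop where
  isOpen : IsOpen C
  eventually_subset : ∀ K ⊆ C, IsCompact K → ∀ᶠ i in l, K ⊆ S i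
  eventually_mem : ∀ t : ℝ, 0 < t → ∀ K : Set X, IsCompact K →
    ∀ᶠ i in l, ∀ y ∈ K, ball y t ⊆ S i → y ∈ C

namespace KernelConv

theorem of_tendsto_thickenedIndicator_compl {ι X : Type*} [PseudoMetricSpace X] {S : ι → Set X}
    {l : Filter ι} {δ : ℝ} (hδ : 0 < δ) {g : C(X, ℝ≥0)}
    (hg : Tendsto (fun i => (thickenedIndicator hδ (S i)ᶜ : C(X, ℝ≥0))) l (𝓝 g)) :
    KernelConv S l {x | g x < 1} := by
  rw [ContinuousMap.tendsto_iff_forall_isCompact_tendstoUniformlyOn] at hg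
  refine ⟨isOpen_lt g.continuous continuous_const, fun K hKC hK => ?_, fun t ht K hK => ?_⟩
  · rcases K.eq_empty_or_nonempty with rfl | hne
    · simp
    obtain ⟨z, hz, hmax⟩ := hK.exists_isMaxOn hne g.continuous.continuousOn
    have hgz : (g z : ℝ) < 1 := hKC hz
    filter_upwards [tendstoUniformlyOn_iff.1 (hg K hK) _ (sub_pos.2 hgz)] with i hi y hy
    by_contra hyS
    have hgy : (g y : ℝ) ≤ g z := hmax hy
    have hclose : |(g y : ℝ) - thickenedIndicator hδ (S i)ᶜ y| < 1 - g z := hi y hy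
    rw [thickenedIndicator_one hδ _ hyS, NNReal.coe_one] at hclose
    linarith [(abs_lt.1 hclose).1]
  · have hgap : 0 < 1 - max (1 - t / δ) 0 :=
      sub_pos.2 (max_lt (sub_lt_self 1 (by positivity)) one_pos)
    filter_upwards [tendstoUniformlyOn_iff.1 (hg K hK) _ hgap] with i hi y hy hball
    have hclose : |(g y : ℝ) - thickenedIndicator hδ (S i)ᶜ y| < _ := hi y hy
    have hle : (thickenedIndicator hδ (S i)ᶜ y : ℝ) ≤ max (1 - t / δ) 0 := by
      rw [← Real.coe_toNNReal']
      exact thickenedIndicator_compl_le_of_ball_subset hδ ht.le hball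
    have : (g y : ℝ) < 1 := by linarith [(abs_lt.1 hclose).2]
    exact this

theorem exists_subseq {X : Type*} [PseudoMetricSpace X] [SigmaCompactSpace X]
    [WeaklyLocallyCompactSpace X] (S : ℕ → Set X) :
    ∃ φ : ℕ → ℕ, StrictMono φ ∧ ∃ C, KernelConv (fun n => S (φ n)) atTop C := by
  have hcompact := isCompact_setOf_lipschitzWith (X := X) (Real.toNNReal 1)⁻¹
    fun _ => isCompact_Icc (a := (0 : ℝ≥0)) (b := 1)
  obtain ⟨g, -, φ, hφ, hg⟩ := hcompact.tendsto_subseq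
    (x := fun n => (thickenedIndicator one_pos (S n)ᶜ : C(X, ℝ≥0))) fun n =>
      ⟨lipschitzWith_thickenedIndicator one_pos _,
        fun x => ⟨zero_le, thickenedIndicator_le_one one_pos _ x⟩⟩
  exact ⟨φ, hφ, _, of_tendsto_thickenedIndicator_compl one_pos hg⟩

section Metric

variable {ι X : Type*} [PseudoMetricSpace X] {S : ι → Set X} {l : Filter ι} {C : Set X}

theorem eventually_forall_exists_mem_dist_lt (h : KernelConv S l C) {B : Set X}
    (hB : TotallyBounded B) {ε : ℝ} (hε : 0 < ε) :
    ∀ᶠ i in l, ∀ x ∈ C ∩ B, ∃ y ∈ S i ∩ B, dist x y < ε := by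
  obtain ⟨T, hTsub, hTfin, hcov⟩ :=
    finite_approx_of_totallyBounded (hB.subset inter_subset_right : TotallyBounded (C ∩ B)) ε hε
  filter_upwards [h.eventually_subset T (hTsub.trans inter_subset_left) hTfin.isCompact]
    with i hi x hx
  obtain ⟨y, hyT, hxy⟩ := mem_iUnion₂.1 (hcov hx)
  exact ⟨y, ⟨hi hyT, (hTsub hyT).2⟩, hxy⟩

theorem disjoint_of_forall_disjoint [l.NeBot] (h : KernelConv S l C) {A : Set X}
    (hA : ∀ i, Disjoint A (S i)) : Disjoint A C := by
  refine disjoint_left.2 fun x hxA hxC => ?_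
  obtain ⟨i, hi⟩ :=
    (h.eventually_subset {x} (singleton_subset_iff.2 hxC) isCompact_singleton).exists
  exact disjoint_left.1 (hA i) hxA (hi rfl)

theorem interior_subset_of_eventually_subset [l.NeBot] (h : KernelConv S l C) {A : Set X}
    (hA : ∀ᶠ i in l, A ⊆ S i) : interior A ⊆ C := by
  intro x hx
  obtain ⟨t, ht, hball⟩ := Metric.mem_nhds_iff.1 (mem_interior_iff_mem_nhds.1 hx)
  obtain ⟨i, hAi, hi⟩ := (hA.and (h.eventually_mem t ht {x} isCompact_singleton)).exists
  exact hi x rfl (hball.trans hAi)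

theorem interior_iInter_subset [l.NeBot] (h : KernelConv S l C) : interior (⋂ i, S i) ⊆ C :=
  h.interior_subset_of_eventually_subset (.of_forall (iInter_subset S))

end Metric

section Convex

open scoped Pointwise

variable {ι E : Type*} [SeminormedAddCommGroup E] [NormedSpace ℝ E] {S : ι → Set E}
  {l : Filter ι} {C : Set E}

theorem convex [ProperSpace E] [l.NeBot] (h : KernelConv S l C) (hS : ∀ i, Convex ℝ (S i)) :
    Convex ℝ C := by
  refine convex_iff_forall_pos.2 fun x hx y hy a b ha hb hab => ?_
  obtain ⟨r, hr, hrC⟩ : ∃ r > 0, closedBall x r ∪ closedBall y r ⊆ C := by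
    obtain ⟨r, hr, hrC⟩ :=
      (isCompact_singleton.insert x : IsCompact {x, y}).exists_cthickening_subset_open h.isOpen
        (by simp [insert_subset_iff, hx, hy])
    refine ⟨r, hr, (union_subset ?_ ?_).trans hrC⟩ <;>
      exact closedBall_subset_cthickening (by simp) r
  have hballs := h.eventually_subset _ hrC ((isCompact_closedBall x r).union
    (isCompact_closedBall y r))
  refine h.interior_subset_of_eventually_subset (A := ball (a • x + b • y) r) ?_
    (by rw [isOpen_ball.interior_eq]; exact mem_ball_self hr)
  filter_upwards [hballs] with i hi
  obtain ⟨hxi, hyi⟩ := union_subset_iff.1 hi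
  calc ball (a • x + b • y) r = a • ball x r + b • ball y r := by
        rw [_root_.smul_ball ha.ne', _root_.smul_ball hb.ne', Real.norm_of_nonneg ha.le,
          Real.norm_of_nonneg hb.le, ball_add_ball (by positivity) (by positivity), ← add_mul,
          hab, one_mul]
    _ ⊆ a • S i + b • S i :=
        add_subset_add (smul_set_mono (ball_subset_closedBall.trans hxi))
          (smul_set_mono (ball_subset_closedBall.trans hyi))
    _ ⊆ S i := convex_iff_pointwise_add_subset.1 (hS i) ha.le hb.le hab

theorem eventually_forall_exists_mem_limit_dist_lt [ProperSpace E] (h : KernelConv S l C)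
    (hS : ∀ i, Convex ℝ (S i)) {p : E} (hp : p ∈ interior (⋂ i, S i)) {B : Set E}
    (hB : Bornology.IsBounded B) (hBc : Convex ℝ B) (hpB : p ∈ B) {ε : ℝ} (hε : 0 < ε) :
    ∀ᶠ i in l, ∀ x ∈ S i ∩ B, ∃ y ∈ C ∩ B, dist x y < ε := by
  obtain ⟨r, hr, hball⟩ := Metric.mem_nhds_iff.1 (mem_interior_iff_mem_nhds.1 hp)
  obtain ⟨c, hc, hcε⟩ := exists_pos_mul_lt hε (diam B)
  set t := min c 1
  have ht : 0 < t := lt_min hc one_pos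
  have ht1 : t ≤ 1 := min_le_right c 1
  filter_upwards [h.eventually_mem (t * r) (by positivity) _ hB.isCompact_closure]
    with i hi x ⟨hxS, hxB⟩
  have hyB : (1 - t) • x + t • p ∈ B := hBc hxB hpB (sub_nonneg.2 ht1) ht.le (by ring)
  refine ⟨(1 - t) • x + t • p, ⟨hi _ (subset_closure hyB) ?_, hyB⟩, ?_⟩
  · exact ball_combo_subset (hS i) hxS (hball.trans (iInter_subset S i)) ht ht1
  · calc dist x ((1 - t) • x + t • p) = t * dist x p := by
          rw [dist_eq_norm, show x - ((1 - t) • x + t • p) = t • (x - p) by module, norm_smul,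
            Real.norm_of_nonneg ht.le, dist_eq_norm]
      _ ≤ c * diam B := by
          gcongr
          exacts [min_le_left c 1, dist_le_diam_of_mem hB hxB hpB]
      _ < ε := by rwa [mul_comm]

theorem tendsto_hausdorffDist_inter [ProperSpace E] (h : KernelConv S l C)
    (hS : ∀ i, Convex ℝ (S i)) {p : E} (hp : p ∈ interior (⋂ i, S i)) {B : Set E}
    (hB : Bornology.IsBounded B) (hBc : Convex ℝ B) (hpB : p ∈ B) :
    Tendsto (fun i => hausdorffDist (S i ∩ B) (C ∩ B)) l (𝓝 0) := by
  refine tendsto_order.2 ⟨fun a ha => .of_forall fun i => ha.trans_le hausdorffDist_nonneg,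
    fun ε hε => ?_⟩
  filter_upwards [h.eventually_forall_exists_mem_limit_dist_lt hS hp hB hBc hpB (half_pos hε),
    h.eventually_forall_exists_mem_dist_lt 
      (hB.isCompact_closure.totallyBounded.subset subset_closure) (half_pos hε)] with i hSC hCS
  refine (hausdorffDist_le_of_mem_dist (half_pos hε).le (fun x hx => ?_) fun x hx => ?_).trans_lt
    (half_lt_self hε)
  · exact (hSC x hx).imp fun y hy => ⟨hy.1, hy.2.le⟩
  · exact (hCS x hx).imp fun y hy => ⟨hy.1, hy.2.le⟩

theorem mapsTo_of_forall_mapsTo [l.NeBot] {F : Type*} [AddCommGroup F] [Module ℝ F]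
    [TopologicalSpace F] [IsTopologicalAddGroup F] [ContinuousSMul ℝ F] (h : KernelConv S l C)
    (hS : ∀ i, Convex ℝ (S i)) (f : F →ᵃ[ℝ] E) {U : Set F} (hU : IsOpen U)
    (hf : ∀ i, MapsTo f U (S i)) {u₀ : F} (hu₀ : f u₀ ∈ interior (⋂ i, S i)) : MapsTo f U C :=
  (mapsTo_interior_of_mapsTo_of_isOpen (convex_iInter hS) f hU
    (fun _ hu => mem_iInter.2 fun i => hf i hu) hu₀).mono_right h.interior_iInter_subset

theorem preimage_eq_of_forall_preimage_eq [l.NeBot] {F : Type*} [AddCommGroup F] [Module ℝ F]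
    [TopologicalSpace F] [IsTopologicalAddGroup F] [ContinuousSMul ℝ F] (h : KernelConv S l C)
    (hS : ∀ i, Convex ℝ (S i)) (f : F →ᵃ[ℝ] E) {U : Set F} (hU : IsOpen U)
    (hf : ∀ i, f ⁻¹' S i = U) {u₀ : F} (hu₀ : f u₀ ∈ interior (⋂ i, S i)) : f ⁻¹' C = U := by
  refine Subset.antisymm ?_ (h.mapsTo_of_forall_mapsTo hS f hU (fun i => (hf i).superset) hu₀)
  have hdisj : Disjoint (f '' Uᶜ) C := h.disjoint_of_forall_disjoint fun i => by
    rw [disjoint_image_left, hf i]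
    exact disjoint_compl_left
  exact disjoint_compl_left_iff_subset.1 (disjoint_image_left.1 hdisj)

end Convex

theorem locHausConv {E : Type*} [NormedAddCommGroup E] [NormedSpace ℂ E] [ProperSpace E]
    {S : ℕ → Set E} {C : Set E} (h : KernelConv S atTop C) (hS : ∀ n, Convex ℝ (S n)) {p : E}
    (hp : p ∈ interior (⋂ n, S n)) : LocHausConv S C := by
  refine ⟨‖p‖ + 1, by positivity, fun R hR =>
    h.tendsto_hausdorffDist_inter hS hp isBounded_ball (convex_ball 0 R) ?_⟩
  rw [mem_ball_zero_iff]
  linarith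

end KernelConv

end Kernel

section DistInDir

open scoped Pointwise

variable {E : Type*} [NormedAddCommGroup E] [NormedSpace ℂ E] {Ω : Set E} {z v : E}

/-- The complex line `z + ℂ·v` in which `distInDir` measures distances (a point if `v = 0`). -/
def complexLine (z v : E) : Set E := z +ᵥ (Submodule.span ℂ {v} : Set E)

theorem mem_complexLine_iff {x : E} : x ∈ complexLine z v ↔ ∃ lam : ℂ, x = z + lam • v := by
  simp [complexLine, mem_vadd_set, Submodule.mem_span_singleton, eq_comm]

theorem left_mem_complexLine (z v : E) : z ∈ complexLine z v :=
  mem_complexLine_iff.2 ⟨0, by simp⟩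

theorem convex_complexLine (z v : E) : Convex ℝ (complexLine z v) :=
  ((Submodule.span ℂ {v}).restrictScalars ℝ).convex.vadd z

theorem isClosed_complexLine (z v : E) : IsClosed (complexLine z v) :=
  (Submodule.closed_of_finiteDimensional (Submodule.span ℂ {v})).vadd z

theorem distInDir_eq_infEDist (Ω : Set E) (z v : E) :
    distInDir Ω z v = infEDist z (complexLine z v ∩ frontier Ω) := by
  have : {x | ∃ lam : ℂ, x = z + lam • v} = complexLine z v :=
    Set.ext fun _ => mem_complexLine_iff.symm
  rw [← this]
  rfl

theorem complexLine_inter_closedBall_subset (hΩ : IsOpen Ω) (hz : z ∈ Ω) {c : ℝ≥0}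
    (hc : c < distInDir Ω z v) : complexLine z v ∩ closedBall z c ⊆ Ω := by
  rw [distInDir_eq_infEDist] at hc
  rw [← hΩ.interior_eq]
  refine subset_interior_of_isPreconnected_of_disjoint_frontier
    ((convex_complexLine z v).inter (convex_closedBall z c)).isPreconnected
    ⟨z, ⟨left_mem_complexLine z v, mem_closedBall_self c.2⟩, by rwa [hΩ.interior_eq]⟩ ?_
  refine disjoint_left.2 fun x ⟨hxv, hxc⟩ hxΩ => ?_
  refine (hc.trans_le (infEDist_le_edist_of_mem ⟨hxv, hxΩ⟩)).not_ge ?_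
  rw [edist_comm, edist_nndist]
  exact ENNReal.coe_le_coe.2 hxc

theorem le_distInDir_of_subset (hΩ : IsOpen Ω) {c : ℝ≥0}
    (h : complexLine z v ∩ closedBall z c ⊆ Ω) : c ≤ distInDir Ω z v := by
  rw [distInDir_eq_infEDist, le_infEDist]
  rintro x ⟨hxv, hxΩ⟩
  by_contra! hlt
  rw [edist_comm, edist_nndist, ENNReal.coe_lt_coe] at hlt
  exact (hΩ.frontier_eq.subset hxΩ).2 (h ⟨hxv, hlt.le⟩)

theorem KernelConv.distInDir_le [ProperSpace E] {ι : Type*} {S : ι → Set E} {l : Filter ι}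
    [l.NeBot] {C : Set E} (h : KernelConv S l C) (hS : ∀ i, IsOpen (S i)) (hz : z ∈ C) {ρ : ℝ≥0∞}
    (hρ : ∀ i, distInDir (S i) z v ≤ ρ) : distInDir C z v ≤ ρ := by
  refine ENNReal.le_of_forall_nnreal_lt fun c hc => ?_
  have hdisc : IsCompact (complexLine z v ∩ closedBall z c) :=
    (isCompact_closedBall z c).inter_left (isClosed_complexLine z v)
  obtain ⟨i, hi⟩ := (h.eventually_subset _
    (complexLine_inter_closedBall_subset h.isOpen hz hc) hdisc).exists
  exact (le_distInDir_of_subset (hS i) hi).trans (hρ i)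

end DistInDir

section Families

variable {d : ℕ} [NeZero d]

theorem isOpen_D1set : IsOpen D1set :=
  isOpen_lt (by fun_prop) continuous_const

theorem zero_mem_D1set : (0 : ℂ) ∈ D1set := by
  simp [D1set]

/-- The point `i e_1`, the common centre of the discs contained in the domains of `𝕂_d`. -/
def basePoint (d : ℕ) [NeZero d] : EuclideanSpace ℂ (Fin d) :=
  Complex.I • EuclideanSpace.single 0 1

/-- Sets `C ∈ 𝕂_d` that meet `ℂ·e_1` in the upper half-plane and satisfy
`δ_C(r i e_1; v) ≤ ρ r` for `r ≥ 1`; thus `𝕃_{d,α}` is the case `v = e_2`,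
`ρ r = r ^ (1 / (2 + α))`. -/
def axisFamily (d : ℕ) [NeZero d] (v : EuclideanSpace ℂ (Fin d)) (ρ : ℝ → ℝ≥0∞) :
    Set (Set (EuclideanSpace ℂ (Fin d))) :=
  {C | C ∈ Kd d ∧
    (range (fun z : ℂ => z • EuclideanSpace.single (0 : Fin d) (1 : ℂ)) ∩ C =
      (fun z : ℂ => z • EuclideanSpace.single (0 : Fin d) (1 : ℂ)) '' {z : ℂ | 0 < z.im}) ∧
    ∀ r : ℝ, 1 ≤ r →
      distInDir C (((r : ℂ) * Complex.I) • EuclideanSpace.single (0 : Fin d) (1 : ℂ)) v ≤ ρ r}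

theorem basePoint_mem_interior_iInter {ι : Sort*} {S : ι → Set (EuclideanSpace ℂ (Fin d))}
    (hS : ∀ i, S i ∈ Kd d) : basePoint d ∈ interior (⋂ i, S i) :=
  mem_interior_of_forall_add_smul_single_mem (convex_iInter fun i => (hS i).1.1.2.1)
    (isOpen_D1set.mem_nhds zero_mem_D1set)
    fun m w hw => mem_iInter.2 fun i => ((hS i).2 m).2 w hw

theorem exists_add_smul_mem_Zset {b : EuclideanSpace ℂ (Fin d)} (hb : b ≠ 0) :
    ∃ (m : Fin d) (lam : ℂ), basePoint d + lam • b ∈ Zset d m := by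
  have hne : {k | b k ≠ 0}.Nonempty := by
    by_contra! hall
    exact hb (PiLp.ext fun k => not_not.1 fun hk => hall.subset hk)
  obtain ⟨m, hm : b m ≠ 0, hmin⟩ := WellFounded.has_min (wellFounded_lt (α := Fin d)) _ hne
  refine ⟨m, ?_⟩
  rcases eq_or_ne m 0 with rfl | hm0
  · exact ⟨-Complex.I / b 0, by simp [Zset, basePoint, hm]⟩
  · have hb0 : ∀ k < m, b k = 0 := fun k hk => not_not.1 fun hk' => hmin k hk' hk
    refine ⟨(b m)⁻¹, ?_⟩
    rw [Zset, if_neg hm0]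
    refine ⟨by simp [basePoint, hb0 0 (Fin.pos_iff_ne_zero.2 hm0)],
      by simp [basePoint, hm0, hm], fun k hk hkm => by simp [basePoint, hk.ne', hb0 k hkm]⟩

theorem noComplexLine_of_disjoint_Zset {C : Set (EuclideanSpace ℂ (Fin d))} (hC : IsOpen C)
    (hconv : Convex ℝ C) (hp : basePoint d ∈ C) (hZ : ∀ m, Disjoint (Zset d m) C) :
    NoComplexLine C := by
  intro a b hb hline
  obtain ⟨m, lam, hlam⟩ := exists_add_smul_mem_Zset hb
  refine disjoint_left.1 (hZ m) hlam (add_mem_of_forall_ray_mem hconv hC (a := a) ?_ hp)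
  intro t _
  rw [← Complex.coe_smul, smul_smul]
  exact hline _

namespace KernelConv

variable {ι : Type*} {S : ι → Set (EuclideanSpace ℂ (Fin d))} {l : Filter ι} [l.NeBot]
  {C : Set (EuclideanSpace ℂ (Fin d))}

theorem mem_Kd (h : KernelConv S l C) (hS : ∀ i, S i ∈ Kd d) : C ∈ Kd d := by
  have hconv : ∀ i, Convex ℝ (S i) := fun i => (hS i).1.1.2.1
  have hint := basePoint_mem_interior_iInter hS
  have hp : basePoint d ∈ C := h.interior_iInter_subset hint
  have hZ : ∀ m, Disjoint (Zset d m) C := fun m =>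
    h.disjoint_of_forall_disjoint fun i => disjoint_iff_inter_eq_empty.2 ((hS i).2 m).1
  refine ⟨⟨⟨h.isOpen, h.convex hconv, _, hp⟩,
    noComplexLine_of_disjoint_Zset h.isOpen (h.convex hconv) hp hZ⟩,
    fun m => ⟨(hZ m).inter_eq, ?_⟩⟩
  let axis : ℂ →ₗ[ℝ] EuclideanSpace ℂ (Fin d) :=
    (LinearMap.toSpanSingleton ℂ _ (EuclideanSpace.single m 1)).restrictScalars ℝ
  let disc : ℂ →ᵃ[ℝ] EuclideanSpace ℂ (Fin d) := .const ℝ ℂ (basePoint d) + axis.toAffineMap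
  exact h.mapsTo_of_forall_mapsTo hconv disc isOpen_D1set (fun i => ((hS i).2 m).2)
    (u₀ := 0) (by simpa [disc, axis] using hint)

theorem mem_axisFamily {v : EuclideanSpace ℂ (Fin d)} {ρ : ℝ → ℝ≥0∞} (h : KernelConv S l C)
    (hS : ∀ i, S i ∈ axisFamily d v ρ) : C ∈ axisFamily d v ρ := by
  have hK : ∀ i, S i ∈ Kd d := fun i => (hS i).1
  let axis : ℂ →ₗ[ℝ] EuclideanSpace ℂ (Fin d) :=
    (LinearMap.toSpanSingleton ℂ _ (EuclideanSpace.single 0 1)).restrictScalars ℝ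
  have hinj : Function.Injective axis := smul_left_injective ℂ (by simp)
  have haxis : axis ⁻¹' C = {z | 0 < z.im} :=
    h.preimage_eq_of_forall_preimage_eq (fun i => (hK i).1.1.2.1) axis.toAffineMap
      (isOpen_lt continuous_const Complex.continuous_im)
      (fun i => (range_inter_eq_image_iff hinj).1 (hS i).2.1)
      (u₀ := Complex.I) (basePoint_mem_interior_iInter hK)
  refine ⟨h.mem_Kd hK, (range_inter_eq_image_iff hinj).2 haxis, fun r hr => ?_⟩
  refine h.distInDir_le (fun i => (hK i).1.1.1) ?_ fun i => (hS i).2.2 r hr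
  have him : ((r : ℂ) * Complex.I) ∈ {z : ℂ | 0 < z.im} := by simpa using one_pos.trans_le hr
  exact haxis.superset him

end KernelConv

theorem statement13_general (d : ℕ) [NeZero d] (v : EuclideanSpace ℂ (Fin d)) (ρ : ℝ → ℝ≥0∞)
    (Cn : ℕ → Set (EuclideanSpace ℂ (Fin d))) (h : ∀ n, Cn n ∈ axisFamily d v ρ) :
    ∃ φ : ℕ → ℕ, StrictMono φ ∧
      ∃ C ∈ axisFamily d v ρ, LocHausConv (fun j => Cn (φ j)) C := by
  obtain ⟨φ, hφ, C, hC⟩ := KernelConv.exists_subseq Cn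
  exact ⟨φ, hφ, C, hC.mem_axisFamily fun n => h (φ n),
    hC.locHausConv (fun n => (h (φ n)).1.1.1.2.1)
      (basePoint_mem_interior_iInter fun n => (h (φ n)).1)⟩

end Families

/-- for `α ∈ (0,1)` and `d ≥ 2`, the family `𝕃_{d,α}` is compact: every
sequence in `𝕃_{d,α}` has a subsequence converging in the local Hausdorff topology to a
domain belonging to `𝕃_{d,α}`. -/
theorem statement13 (d : ℕ) [NeZero d] (hd : 1 < d) (α : ℝ) (hα : α ∈ Set.Ioo (0:ℝ) 1)
    (Cn : ℕ → Set (EuclideanSpace ℂ (Fin d))) (h : ∀ n, Cn n ∈ Ld d hd α) :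
    ∃ φ : ℕ → ℕ, StrictMono φ ∧ ∃ C ∈ Ld d hd α, LocHausConv (fun j => Cn (φ j)) C :=
  statement13_general d _ _ Cn h
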